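/- arXiv:2007.04352 — 3 statements merged into one kernel-verified Lean document; each statement's English description precedes it below -/
import Mathlib

section
/- Let X be a set and let Φ and Ψ be flows on X. Suppose there exists p ∈ X such that t ↦ φ^t(p) is injective, and suppose there exist δ > 0 and a function τ : ℝ → ℝ continuous at 0 such that ψ^s = φ^{τ(s)} as maps X → X for all s with |s| < δ. Then there exists c ∈ ℝ such that ψ^s = φ^{c·s} for all s ∈ ℝ. -/
/-!
After subtracting `τ 0`, which is a period of `φ`, the function `τ` is small near `0`. Its failure
of additivity is always a period of `φ`, hence vanishes near `0` because `φ` has no small nonzero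
periods. A function which is additive near `0` extends to an additive map, by rescaling; the
extension inherits continuity at `0`, so it is linear. Finally, actions of a real vector space
which agree for small times agree for all times.
-/

open Filter Topology

section LocallyAdditive

variable {E F : Type*} [AddCommGroup E] [TopologicalSpace E] [AddCommGroup F]

/-- A local homomorphism at `0`: `f` is only required to respect sums of pairs near `(0, 0)`, and
its values away from `0` are irrelevant. -/
def IsLocallyAdditive (f : E → F) : Prop :=
  ∀ᶠ z : E × E in 𝓝 0, f (z.1 + z.2) = f z.1 + f z.2

namespace IsLocallyAdditive

variable {f : E → F}

theorem map_zero (hf : IsLocallyAdditive f) : f 0 = 0 := by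
  simpa using hf.self_of_nhds

variable [Module ℝ E] [ContinuousSMul ℝ E]

theorem eventually_nsmul_inv_smul (hf : IsLocallyAdditive f) :
    ∀ᶠ x in 𝓝 0, ∀ n : ℕ, n ≠ 0 → n • f ((n : ℝ)⁻¹ • x) = f x := by
  have hadd_near := hf
  rw [IsLocallyAdditive, ← Prod.mk_zero_zero, nhds_prod_eq] at hadd_near
  obtain ⟨V, ⟨hV, hVbal⟩, hadd⟩ :=
    (nhds_basis_balanced ℝ E).prod_self.eventually_iff.1 hadd_near
  filter_upwards [hV] with x hx n hn
  have hn_pos : (0 : ℝ) < n := by positivity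
  have mem_of_le : ∀ k ≤ n, k • ((n : ℝ)⁻¹ • x) ∈ V := fun k hk ↦ by
    rw [← Nat.cast_smul_eq_nsmul ℝ, smul_smul, ← div_eq_mul_inv]
    refine hVbal.smul_mem ?_ hx
    rw [Real.norm_of_nonneg (by positivity), div_le_one hn_pos]
    exact_mod_cast hk
  have map_nsmul_of_le : ∀ k ≤ n, f (k • ((n : ℝ)⁻¹ • x)) = k • f ((n : ℝ)⁻¹ • x) := by
    intro k hk
    induction k with
    | zero => simp only [zero_smul, hf.map_zero]
    | succ k ih =>
      have hsum := hadd (Set.mk_mem_prod (mem_of_le k (by lia))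
        (one_nsmul ((n : ℝ)⁻¹ • x) ▸ mem_of_le 1 (by lia)))
      rw [succ_nsmul, succ_nsmul, hsum, ih (by lia)]
  rw [← map_nsmul_of_le n le_rfl, ← Nat.cast_smul_eq_nsmul ℝ, smul_inv_smul₀ hn_pos.ne']

end IsLocallyAdditive

end LocallyAdditive

section RealVectorSpace

variable {E : Type*} [AddCommGroup E] [Module ℝ E] [TopologicalSpace E] [ContinuousSMul ℝ E]

theorem tendsto_inv_natCast_smul_nhds_zero (x : E) :
    Tendsto (fun n : ℕ ↦ (n : ℝ)⁻¹ • x) atTop (𝓝 0) := by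
  simpa using (tendsto_inv_atTop_nhds_zero_nat (𝕜 := ℝ)).smul_const x

theorem addChar_eq_of_eventuallyEq_nhds_zero {M : Type*} [Monoid M] {φ ψ : AddChar E M}
    (h : φ =ᶠ[𝓝 0] ψ) : φ = ψ := by
  ext x
  obtain ⟨n, heq, hn⟩ :=
    ((tendsto_inv_natCast_smul_nhds_zero x).eventually h |>.and (eventually_ne_atTop 0)).exists
  have hx : n • ((n : ℝ)⁻¹ • x) = x := by
    rw [← Nat.cast_smul_eq_nsmul ℝ, smul_inv_smul₀ (Nat.cast_ne_zero.2 hn)]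
  rw [← hx, AddChar.map_nsmul_eq_pow, AddChar.map_nsmul_eq_pow, heq]

namespace IsLocallyAdditive

variable {F : Type*} [AddCommGroup F] {f : E → F}

theorem exists_eventually_nsmul_inv_smul_eq (hf : IsLocallyAdditive f) (x : E) :
    ∃ y, ∀ᶠ n : ℕ in atTop, n • f ((n : ℝ)⁻¹ • x) = y := by
  have hscale := (tendsto_inv_natCast_smul_nhds_zero x).eventually hf.eventually_nsmul_inv_smul
  obtain ⟨m, hm, hm_ne⟩ := (hscale.and (eventually_ne_atTop 0)).exists
  refine ⟨m • f ((m : ℝ)⁻¹ • x), ?_⟩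
  filter_upwards [hscale, eventually_ne_atTop 0] with n hn hn_ne
  calc n • f ((n : ℝ)⁻¹ • x)
      = n • m • f ((m : ℝ)⁻¹ • (n : ℝ)⁻¹ • x) := by rw [hn m hm_ne]
    _ = m • n • f ((n : ℝ)⁻¹ • (m : ℝ)⁻¹ • x) := by rw [smul_comm n m, smul_comm (n : ℝ)⁻¹]
    _ = m • f ((m : ℝ)⁻¹ • x) := by rw [hm n hn_ne]

theorem exists_addMonoidHom_eventuallyEq (hf : IsLocallyAdditive f) :
    ∃ g : E →+ F, g =ᶠ[𝓝 0] f := by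
  choose g hg using hf.exists_eventually_nsmul_inv_smul_eq
  have g_add (x y : E) : g (x + y) = g x + g y := by
    have hpair : Tendsto (fun n : ℕ ↦ ((n : ℝ)⁻¹ • x, (n : ℝ)⁻¹ • y)) atTop (𝓝 0) :=
      (tendsto_inv_natCast_smul_nhds_zero x).prodMk_nhds (tendsto_inv_natCast_smul_nhds_zero y)
    obtain ⟨n, hxy, hx, hy, hadd⟩ :=
      ((hg (x + y)).and <| (hg x).and <| (hg y).and <| hpair.eventually hf).exists
    rw [← hxy, ← hx, ← hy, smul_add, hadd, smul_add]
  refine ⟨AddMonoidHom.mk' g g_add, ?_⟩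
  filter_upwards [hf.eventually_nsmul_inv_smul] with x hx
  obtain ⟨n, hgn, hn⟩ := ((hg x).and (eventually_ne_atTop 0)).exists
  exact hgn.symm.trans (hx n hn)

theorem exists_continuousLinearMap_eventuallyEq [IsTopologicalAddGroup E] [Module ℝ F]
    [TopologicalSpace F] [IsTopologicalAddGroup F] [ContinuousSMul ℝ F] [T2Space F]
    (hf : IsLocallyAdditive f) (hcont : ContinuousAt f 0) : ∃ L : E →L[ℝ] F, L =ᶠ[𝓝 0] f := by
  obtain ⟨g, hg⟩ := hf.exists_addMonoidHom_eventuallyEq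
  have g_cont : Continuous g := continuous_of_continuousAt_zero g (hcont.congr hg.symm)
  exact ⟨g.toRealLinearMap g_cont, hg⟩

end IsLocallyAdditive

end RealVectorSpace

theorem addChar_sub_eq_one_of_eq {A M : Type*} [AddGroup A] [Monoid M] (φ : AddChar A M) {a b : A}
    (h : φ a = φ b) : φ (a - b) = 1 := by
  rw [sub_eq_add_neg, φ.map_add_eq_mul, h, ← φ.map_add_eq_mul, add_neg_cancel, φ.map_zero_eq_one]

theorem isLocallyAdditive_of_addChar_comp_eventuallyEq {E F M : Type*} [AddCommGroup E]
    [TopologicalSpace E] [ContinuousAdd E] [AddCommGroup F] [TopologicalSpace F]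
    [IsTopologicalAddGroup F] [Monoid M] {φ : AddChar F M} {ψ : AddChar E M} {ρ : E → F}
    (hφ : ∀ᶠ t in 𝓝[≠] 0, φ t ≠ 1) (hρ : Tendsto ρ (𝓝 0) (𝓝 0)) (h : ∀ᶠ s in 𝓝 0, ψ s = φ (ρ s)) :
    IsLocallyAdditive ρ := by
  have tendsto_fst : Tendsto (Prod.fst : E × E → E) (𝓝 0) (𝓝 0) := continuous_fst.tendsto 0
  have tendsto_snd : Tendsto (Prod.snd : E × E → E) (𝓝 0) (𝓝 0) := continuous_snd.tendsto 0
  have tendsto_sum : Tendsto (fun z : E × E ↦ z.1 + z.2) (𝓝 0) (𝓝 0) := by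
    simpa using tendsto_fst.add tendsto_snd
  have defect_tendsto :
      Tendsto (fun z : E × E ↦ ρ (z.1 + z.2) - (ρ z.1 + ρ z.2)) (𝓝 0) (𝓝 0) := by
    simpa using (hρ.comp tendsto_sum).sub ((hρ.comp tendsto_fst).add (hρ.comp tendsto_snd))
  filter_upwards [defect_tendsto.eventually (eventually_nhdsWithin_iff.1 hφ),
    tendsto_fst.eventually h, tendsto_snd.eventually h, tendsto_sum.eventually h]
    with z no_small_period hfst hsnd hsum
  have defect_period : φ (ρ (z.1 + z.2) - (ρ z.1 + ρ z.2)) = 1 := by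
    apply addChar_sub_eq_one_of_eq
    rw [← hsum, ψ.map_add_eq_mul, φ.map_add_eq_mul, hfst, hsnd]
  exact sub_eq_zero.1 (not_imp_not.1 no_small_period defect_period)

/-- An action of `F` on `X` is an `AddChar F (Function.End X)`. The periods of `φ` may form a
nontrivial discrete subgroup, as they do for a periodic flow. -/
theorem stmt4_general {E F M : Type*} [AddCommGroup E] [Module ℝ E] [TopologicalSpace E]
    [IsTopologicalAddGroup E] [ContinuousSMul ℝ E] [AddCommGroup F] [Module ℝ F]
    [TopologicalSpace F] [IsTopologicalAddGroup F] [ContinuousSMul ℝ F] [T2Space F] [Monoid M]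
    (φ : AddChar F M) (ψ : AddChar E M) (hφ : ∀ᶠ t in 𝓝[≠] 0, φ t ≠ 1)
    (τ : E → F) (hτ : ContinuousAt τ 0) (h : ∀ᶠ s in 𝓝 0, ψ s = φ (τ s)) :
    ∃ L : E →L[ℝ] F, ∀ s, ψ s = φ (L s) := by
  let ρ : E → F := fun s ↦ τ s - τ 0
  have period_τ_zero : φ (τ 0) = 1 := by rw [← h.self_of_nhds, ψ.map_zero_eq_one]
  have hρ : ContinuousAt ρ 0 := hτ.sub continuousAt_const
  have ψ_eq_ρ : ∀ᶠ s in 𝓝 0, ψ s = φ (ρ s) := h.mono fun s hs ↦ by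
    rw [hs, ← sub_add_cancel (τ s) (τ 0), φ.map_add_eq_mul, period_τ_zero, mul_one]
  have ρ_add : IsLocallyAdditive ρ :=
    isLocallyAdditive_of_addChar_comp_eventuallyEq hφ (by simpa [ρ] using hρ.tendsto) ψ_eq_ρ
  obtain ⟨L, hL⟩ := ρ_add.exists_continuousLinearMap_eventuallyEq hρ
  have ψ_eq_L : ψ = φ.compAddMonoidHom (L : E →+ F) :=
    addChar_eq_of_eventuallyEq_nhds_zero <| by
      filter_upwards [ψ_eq_ρ, hL] with s hs hLs
      exact hs.trans (congrArg φ hLs.symm)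
  exact ⟨L, DFunLike.congr_fun ψ_eq_L⟩

/-- Centralizer criterion: if ψ^s = φ^{τ(s)} for all small s with τ continuous
at 0 and Φ has an injective orbit, then Ψ is a constant-speed reparameterization of Φ. -/
theorem stmt4 {X : Type*} (φ ψ : ℝ → X → X)
    (hφ0 : φ 0 = id) (hφadd : ∀ s t : ℝ, φ (s + t) = φ s ∘ φ t)
    (hψ0 : ψ 0 = id) (hψadd : ∀ s t : ℝ, ψ (s + t) = ψ s ∘ ψ t)
    (hp : ∃ p : X, Function.Injective fun t : ℝ => φ t p)
    (τ : ℝ → ℝ) (hτcont : ContinuousAt τ 0)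
    (hδ : ∃ δ : ℝ, 0 < δ ∧ ∀ s : ℝ, |s| < δ → ψ s = φ (τ s)) :
    ∃ c : ℝ, ∀ s : ℝ, ψ s = φ (c * s) := by
  obtain ⟨p, hp⟩ := hp
  have no_period (t : ℝ) (ht : t ≠ 0) : φ t ≠ id := fun h ↦
    ht (hp (congrFun (h.trans hφ0.symm) p))
  have small_times : ∀ᶠ s in 𝓝 0, ψ s = φ (τ s) :=
    Metric.eventually_nhds_iff.2 (by simpa only [Real.dist_0_eq_abs] using hδ)
  obtain ⟨L, hL⟩ := stmt4_general (M := Function.End X) ⟨φ, hφ0, hφadd⟩ ⟨ψ, hψ0, hψadd⟩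
    (eventually_mem_nhdsWithin.mono no_period) τ hτcont small_times
  have L_apply (s : ℝ) : L s = L 1 * s := by simpa [mul_comm] using L.map_smul s 1
  exact ⟨L 1, fun s ↦ L_apply s ▸ hL s⟩
end

section
/- Let M be a metric space, Φ a flow on M, ε > 0, and h : M → M a uniformly continuous map satisfying h ∘ φ^t = φ^t ∘ h for all t ∈ ℝ and dist(h(z), z) < ε for all z ∈ M. Let q ∈ M with h(q) = q, and assume the following expansivity property: for all x, y ∈ W^u(q), if dist(φ^t(x), φ^t(y)) < ε for all t ∈ ℝ, then x = y. Then h(x) = x for every x ∈ W^u(q). The analogous statement holds with W^s in place of W^u. -/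
open Filter

/-- The stable set of `x` for the flow `φ`. -/
def stableSet {M : Type*} [MetricSpace M] (φ : ℝ → M → M) (x : M) : Set M :=
  {y | Tendsto (fun t : ℝ => dist (φ t y) (φ t x)) atTop (nhds 0)}

/-- The unstable set of `x` for the flow `φ`. -/
def unstableSet {M : Type*} [MetricSpace M] (φ : ℝ → M → M) (x : M) : Set M :=
  {y | Tendsto (fun t : ℝ => dist (φ (-t) y) (φ (-t) x)) atTop (nhds 0)}

/-!
Since `h` is uniformly continuous, commutes with the flow and fixes `q`, it maps the set of points
asymptotic to `q` into itself. For `x` in this set, the orbits of `h x` and `x` stay within `ε` of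
each other at all times because `h` moves the point `φ t x` by less than `ε`, so expansivity
forces `h x = x`. Forward and backward time differ only in the filter along which orbits are
compared.
-/

open Set Topology Uniformity

section Asymptotic

variable {ι M N : Type*}

/-- The set of points whose orbit under the family `φ` is asymptotic to that of `x` along the
filter `l`. Time is an arbitrary index type, so that stable and unstable sets are the cases
`l = atTop` and `l = atBot` of one notion. -/
def asymptoticSet [UniformSpace M] (l : Filter ι) (φ : ι → M → M) (x : M) : Set M :=
  {y | Tendsto (fun i => (φ i y, φ i x)) l (𝓤 M)}

/-- Expansivity of the family `φ` on `W`: two points of `W` whose orbits are `V`-close at all times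
coincide. The relation `V` plays the role of the expansivity constant; for the constant `ε` of a
metric space it is `{p | dist p.1 p.2 < ε}`. -/
def IsExpansiveOn (φ : ι → M → M) (V : SetRel M M) (W : Set M) : Prop :=
  ∀ x ∈ W, ∀ y ∈ W, (∀ i, (φ i x, φ i y) ∈ V) → x = y

theorem mem_asymptoticSet_iff [UniformSpace M] {l : Filter ι} {φ : ι → M → M} {x y : M} :
    y ∈ asymptoticSet l φ x ↔ Tendsto (fun i => (φ i y, φ i x)) l (𝓤 M) :=
  Iff.rfl

theorem mem_asymptoticSet_iff_dist [PseudoMetricSpace M] {l : Filter ι} {φ : ι → M → M}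
    {x y : M} :
    y ∈ asymptoticSet l φ x ↔ Tendsto (fun i => dist (φ i y) (φ i x)) l (𝓝 0) :=
  tendsto_uniformity_iff_dist_tendsto_zero

theorem mapsTo_asymptoticSet [UniformSpace M] [UniformSpace N] {φ : ι → M → M} {ψ : ι → N → N}
    {h : M → N} (hUC : UniformContinuous h) (hsemi : ∀ i, Function.Semiconj h (φ i) (ψ i))
    (l : Filter ι) (x : M) :
    MapsTo h (asymptoticSet l φ x) (asymptoticSet l ψ (h x)) := by
  intro y hy
  have h_image : Tendsto (fun i => (h (φ i y), h (φ i x))) l (𝓤 N) :=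
    Tendsto.comp hUC (mem_asymptoticSet_iff.1 hy)
  simpa only [mem_asymptoticSet_iff, (hsemi _).eq] using h_image

theorem IsExpansiveOn.eqOn_id {φ : ι → M → M} {V : SetRel M M} {W : Set M} {h : M → M}
    (hexp : IsExpansiveOn φ V W) (hmaps : MapsTo h W W)
    (hcomm : ∀ i, Function.Commute h (φ i)) (hclose : ∀ z, (h z, z) ∈ V) :
    EqOn h id W := by
  intro x hx
  have orbits_close (i : ι) : (φ i (h x), φ i x) ∈ V := (hcomm i).eq x ▸ hclose (φ i x)
  exact hexp (h x) (hmaps hx) x hx orbits_close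

theorem stmt6_general [UniformSpace M] (l : Filter ι) {φ : ι → M → M} {V : SetRel M M} {h : M → M}
    (hUC : UniformContinuous h) (hcomm : ∀ i, Function.Commute h (φ i))
    (hclose : ∀ z, (h z, z) ∈ V) {q : M} (hq : Function.IsFixedPt h q)
    (hexp : IsExpansiveOn φ V (asymptoticSet l φ q)) :
    EqOn h id (asymptoticSet l φ q) := by
  have hmaps : MapsTo h (asymptoticSet l φ q) (asymptoticSet l φ q) := by
    simpa only [hq.eq] using mapsTo_asymptoticSet hUC hcomm l q
  exact hexp.eqOn_id hmaps hcomm hclose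

end Asymptotic

section MetricSpace

variable {M : Type*} [MetricSpace M] (φ : ℝ → M → M) (x : M)

theorem stableSet_eq_asymptoticSet_atTop : stableSet φ x = asymptoticSet atTop φ x :=
  Set.ext fun _ => mem_asymptoticSet_iff_dist.symm

theorem unstableSet_eq_asymptoticSet_atBot : unstableSet φ x = asymptoticSet atBot φ x := by
  ext y
  rw [mem_asymptoticSet_iff_dist, ← map_neg_atTop, tendsto_map'_iff]
  rfl

end MetricSpace

/-- Lemma 4.3 of the paper: a commuting, uniformly continuous map `h`
that is `ε`-close to the identity and fixes `q` fixes each point of `W^u(q)`, provided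
the flow is `ε`-expansive on `W^u(q)`; likewise for `W^s(q)`. -/
theorem stmt6 {M : Type*} [MetricSpace M] (φ : ℝ → M → M)
    (hφ0 : ∀ x, φ 0 x = x) (hφadd : ∀ s t : ℝ, ∀ x, φ (s + t) x = φ s (φ t x))
    (ε : ℝ) (hε : 0 < ε)
    (h : M → M) (hUC : UniformContinuous h)
    (hcomm : ∀ t : ℝ, h ∘ φ t = φ t ∘ h)
    (hclose : ∀ z : M, dist (h z) z < ε)
    (q : M) (hq : h q = q) :
    ((∀ x ∈ unstableSet φ q, ∀ y ∈ unstableSet φ q,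
        (∀ t : ℝ, dist (φ t x) (φ t y) < ε) → x = y) →
      ∀ x ∈ unstableSet φ q, h x = x) ∧
    ((∀ x ∈ stableSet φ q, ∀ y ∈ stableSet φ q,
        (∀ t : ℝ, dist (φ t x) (φ t y) < ε) → x = y) →
      ∀ x ∈ stableSet φ q, h x = x) := by
  have hcommute (t : ℝ) : Function.Commute h (φ t) := congrFun (hcomm t)
  let V : SetRel M M := {p | dist p.1 p.2 < ε}
  have hV : ∀ z, (h z, z) ∈ V := hclose
  rw [unstableSet_eq_asymptoticSet_atBot, stableSet_eq_asymptoticSet_atTop]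
  exact ⟨fun hexp => stmt6_general atBot hUC hcommute hV hq hexp,
    fun hexp => stmt6_general atTop hUC hcommute hV hq hexp⟩
end

section
/- Let M be a metric space, Φ a flow on M, ε > 0, and h : M → M a uniformly continuous map satisfying h ∘ φ^t = φ^t ∘ h for all t ∈ ℝ and dist(h(z), z) < ε for all z ∈ M. Assume the following expansivity property: for all x, y ∈ M with y ∈ W^u(x) or y ∈ W^s(x), if dist(φ^t(x), φ^t(y)) < ε for all t ∈ ℝ, then x = y. If h(p) = p and there is an su-path from p to q, then h(q) = q. -/
open Filter

/-- One step of an su-path: move within a stable or an unstable set. -/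
def suStep {M : Type*} [MetricSpace M] (φ : ℝ → M → M) (x y : M) : Prop :=
  y ∈ stableSet φ x ∨ y ∈ unstableSet φ x

/-- There is an su-path from `p` to `q`: a finite chain of stable/unstable steps. -/
def suPath {M : Type*} [MetricSpace M] (φ : ℝ → M → M) (p q : M) : Prop :=
  Relation.ReflTransGen (suStep φ) p q

/-!
Suppose `h` fixes `x`, and `y` is asymptotic to `x` in forward or in backward time. Since `h` is
uniformly continuous and commutes with the flow, `h y` is asymptotic to `h x = x`, hence to `y`.
The orbits of `y` and `h y` also stay `ε`-close at all times, because `h` carries the first one to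
the second. Expansivity then forces `h y = y`, and this propagates along su-paths.
-/

open Function Uniformity

/-- The points `x` and `y` are asymptotic along `l`: their images under the family `φ` become
arbitrarily close, in the sense of the uniformity, as the parameter tends to `l`. The filters
`atTop` and `atBot` on `ℝ` give the stable and the unstable sets of a flow. -/
def AsymptoticAlong {T M : Type*} [UniformSpace M] (φ : T → M → M) (l : Filter T) (x y : M) :
    Prop :=
  Tendsto (fun t => (φ t x, φ t y)) l (𝓤 M)

namespace AsymptoticAlong

variable {T M : Type*} [UniformSpace M] {φ : T → M → M} {l : Filter T} {h : M → M} {x y z : M}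

theorem symm (hxy : AsymptoticAlong φ l x y) : AsymptoticAlong φ l y x :=
  Tendsto.uniformity_symm hxy

theorem trans (hxy : AsymptoticAlong φ l x y) (hyz : AsymptoticAlong φ l y z) :
    AsymptoticAlong φ l x z :=
  Tendsto.uniformity_trans hxy hyz

theorem map (hxy : AsymptoticAlong φ l x y) (hh : UniformContinuous h)
    (hcomm : ∀ t, Function.Commute h (φ t)) : AsymptoticAlong φ l (h x) (h y) := by
  have himage : Tendsto (fun t => (h (φ t x), h (φ t y))) l (𝓤 M) := Tendsto.comp hh hxy
  simpa only [AsymptoticAlong, (hcomm _).eq] using himage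

theorem self_map_of_isFixedPt (hyx : AsymptoticAlong φ l y x) (hh : UniformContinuous h)
    (hcomm : ∀ t, Function.Commute h (φ t)) (hx : IsFixedPt h x) :
    AsymptoticAlong φ l y (h y) := by
  have hxy : AsymptoticAlong φ l x (h y) := by simpa only [hx.eq] using (hyx.map hh hcomm).symm
  exact hyx.trans hxy

end AsymptoticAlong

section SuPath

variable {M : Type*} [MetricSpace M] {φ : ℝ → M → M} {h : M → M} {x y : M}

theorem mem_stableSet_iff_asymptoticAlong :
    y ∈ stableSet φ x ↔ AsymptoticAlong φ atTop y x := by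
  rw [AsymptoticAlong, tendsto_uniformity_iff_dist_tendsto_zero]
  rfl

theorem mem_unstableSet_iff_asymptoticAlong :
    y ∈ unstableSet φ x ↔ AsymptoticAlong φ atBot y x := by
  rw [AsymptoticAlong, tendsto_uniformity_iff_dist_tendsto_zero, ← map_neg_atTop, tendsto_map'_iff]
  rfl

theorem suStep_iff_asymptoticAlong :
    suStep φ x y ↔ AsymptoticAlong φ atTop y x ∨ AsymptoticAlong φ atBot y x :=
  or_congr mem_stableSet_iff_asymptoticAlong mem_unstableSet_iff_asymptoticAlong

theorem suStep_map_self_of_isFixedPt (hxy : suStep φ x y) (hh : UniformContinuous h)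
    (hcomm : ∀ t, Function.Commute h (φ t)) (hx : IsFixedPt h x) : suStep φ (h y) y := by
  rw [suStep_iff_asymptoticAlong] at hxy ⊢
  exact hxy.imp (fun hs => hs.self_map_of_isFixedPt hh hcomm hx)
    (fun hu => hu.self_map_of_isFixedPt hh hcomm hx)

theorem isFixedPt_of_suStep {ε : ℝ} (hh : UniformContinuous h)
    (hcomm : ∀ t, Function.Commute h (φ t)) (hclose : ∀ z, dist (h z) z < ε)
    (hexp : ∀ x y, suStep φ x y → (∀ t, dist (φ t x) (φ t y) < ε) → x = y)
    (hx : IsFixedPt h x) (hxy : suStep φ x y) : IsFixedPt h y := by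
  have horbit (t : ℝ) : dist (φ t (h y)) (φ t y) < ε := by
    rw [← (hcomm t).eq]
    exact hclose (φ t y)
  exact hexp (h y) y (suStep_map_self_of_isFixedPt hxy hh hcomm hx) horbit

theorem stmt7_general {ε : ℝ} (hh : UniformContinuous h)
    (hcomm : ∀ t, Function.Commute h (φ t)) (hclose : ∀ z, dist (h z) z < ε)
    (hexp : ∀ x y, suStep φ x y → (∀ t, dist (φ t x) (φ t y) < ε) → x = y)
    {p q : M} (hp : IsFixedPt h p) (hpq : suPath φ p q) : IsFixedPt h q := by
  induction hpq with
  | refl => exact hp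
  | tail _ hstep hfixed => exact isFixedPt_of_suStep hh hcomm hclose hexp hfixed hstep

end SuPath

/-- a commuting, uniformly continuous map `ε`-close to the identity that
fixes `p` fixes every point reachable from `p` by an su-path, under `ε`-expansivity on
stable/unstable sets. -/
theorem stmt7 {M : Type*} [MetricSpace M] (φ : ℝ → M → M)
    (hφ0 : ∀ x, φ 0 x = x) (hφadd : ∀ s t : ℝ, ∀ x, φ (s + t) x = φ s (φ t x))
    (ε : ℝ) (hε : 0 < ε)
    (h : M → M) (hUC : UniformContinuous h)
    (hcomm : ∀ t : ℝ, h ∘ φ t = φ t ∘ h)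
    (hclose : ∀ z : M, dist (h z) z < ε)
    (hexp : ∀ x y : M, (y ∈ unstableSet φ x ∨ y ∈ stableSet φ x) →
      (∀ t : ℝ, dist (φ t x) (φ t y) < ε) → x = y)
    (p q : M) (hp : h p = p) (hpq : suPath φ p q) :
    h q = q :=
  stmt7_general hUC (fun t => semiconj_iff_comp_eq.2 (hcomm t)) hclose
    (fun x y hxy => hexp x y hxy.symm) hp hpq
end
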